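/- Soundness of the infinite-binary-tree semantics of the name algebra: define the interpretation ⟦·⟧ : Term → (Stream Bool → ℕ × Stream Bool) by ⟦var x⟧(β) = (x, β); ⟦t.l⟧(β) = ⟦t⟧(l·β); ⟦t.r⟧(β) = ⟦t⟧(r·β); ⟦u ∧ v⟧(l·β) = ⟦u⟧(β) and ⟦u ∧ v⟧(r·β) = ⟦v⟧(β), where l, r denote the two Boolean values and · is prepending to a stream. Then a → b implies ⟦a⟧ = ⟦b⟧, and consequently a ≈ b implies ⟦a⟧ = ⟦b⟧. -/

import Mathlib

/-- Terms of the name algebra over atoms in ℕ. -/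
inductive Term : Type
  | var : ℕ → Term
  | projL : Term → Term
  | projR : Term → Term
  | join : Term → Term → Term
deriving DecidableEq

/-- One-step rewrite relation: the three rules `(u ∧ v).l → u`, `(u ∧ v).r → v`,
`(u.l ∧ u.r) → u`, closed under all term contexts. -/
inductive Step : Term → Term → Prop
  | splitL (u v : Term) : Step (Term.projL (Term.join u v)) u
  | splitR (u v : Term) : Step (Term.projR (Term.join u v)) v
  | merge (u : Term) : Step (Term.join (Term.projL u) (Term.projR u)) u
  | congL {a b : Term} : Step a b → Step (Term.projL a) (Term.projL b)
  | congR {a b : Term} : Step a b → Step (Term.projR a) (Term.projR b)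
  | congJoinL {a b : Term} (v : Term) : Step a b → Step (Term.join a v) (Term.join b v)
  | congJoinR {a b : Term} (u : Term) : Step a b → Step (Term.join u a) (Term.join u b)

/-- Reflexive-transitive closure of `Step`. -/
def Steps : Term → Term → Prop := Relation.ReflTransGen Step

/-- A term is in normal form if no rewrite step applies to it. -/
def NormalForm (n : Term) : Prop := ¬ ∃ m, Step n m

/-- `u ≈ v` : the normal forms of `u` and `v` coincide, i.e. they reach a common normal form. -/
def TermEquiv (u v : Term) : Prop := ∃ n, NormalForm n ∧ Steps u n ∧ Steps v n

/-- Interpretation of terms as functions on infinite binary sequences, where the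
Boolean `false` plays the role of `l` and `true` plays the role of `r`. -/
def interp : Term → Stream' Bool → ℕ × Stream' Bool
  | Term.var x, β => (x, β)
  | Term.projL t, β => interp t (Stream'.cons false β)
  | Term.projR t, β => interp t (Stream'.cons true β)
  | Term.join u v, β =>
      if β.head = false then interp u β.tail else interp v β.tail

theorem interp_join_cons_false (u v : Term) (β : Stream' Bool) :
    interp (Term.join u v) (Stream'.cons false β) = interp u β :=
  rfl

theorem interp_join_cons_true (u v : Term) (β : Stream' Bool) :
    interp (Term.join u v) (Stream'.cons true β) = interp v β :=
  rfl

theorem interp_projL_join (u v : Term) :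
    interp (Term.projL (Term.join u v)) = interp u :=
  funext (interp_join_cons_false u v)

theorem interp_projR_join (u v : Term) :
    interp (Term.projR (Term.join u v)) = interp v :=
  funext (interp_join_cons_true u v)

theorem interp_join_projL_projR (u : Term) :
    interp (Term.join (Term.projL u) (Term.projR u)) = interp u := by
  funext β
  rw [← Stream'.eta β]
  cases β.head with
  | false => exact interp_join_cons_false _ _ β.tail
  | true => exact interp_join_cons_true _ _ β.tail

theorem Step.interp_eq {a b : Term} (h : Step a b) : interp a = interp b := by
  induction h with
  | splitL u v => exact interp_projL_join u v
  | splitR u v => exact interp_projR_join u v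
  | merge u => exact interp_join_projL_projR u
  | congL _ ih | congR _ ih | congJoinL _ _ ih | congJoinR _ _ ih =>
    funext β
    simp only [interp, ih]

theorem Steps.interp_eq {a b : Term} (h : Steps a b) : interp a = interp b :=
  Relation.reflTransGen_le_of_equivalence_of_le (eq_equivalence.comap interp)
    (fun _ _ => Step.interp_eq) _ _ h

theorem TermEquiv.interp_eq {a b : Term} : TermEquiv a b → interp a = interp b
  | ⟨_, _, ha, hb⟩ => ha.interp_eq.trans hb.interp_eq.symm

/-- Soundness of the infinite-binary-tree semantics: rewriting preserves the
interpretation, hence so does the equivalence `≈`. -/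
theorem interp_sound :
    (∀ a b : Term, Step a b → interp a = interp b) ∧
    (∀ a b : Term, TermEquiv a b → interp a = interp b) :=
  ⟨fun _ _ => Step.interp_eq, fun _ _ => TermEquiv.interp_eq⟩
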